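/- Let D be an ADF and let v and w be two strongly admissible interpretations of D. Then there is no argument a with v(a) = t and w(a) = f; consequently v and w agree on every argument to which both assign a value in {t, f}, and the join v ⊔_i w is a well-defined interpretation. -/

import Mathlib

/-!
Two justifications of the same argument `a`, one for `v` and one for `w`, must assign `a` the
same value (`SJrel.agree`). This is an induction on the first justification. If `v` accepted
`a` via parents `P` while `w` denied it via parents `Q` (or vice versa), then by the induction
hypothesis `v` and `w` agree on `P ∩ Q`, so `v|_P` and `w|_Q` have a common two-valued
completion (`exists_common_completion`), on which the acceptance condition of `a` would be
both true and false.
-/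

/-- Three truth values: true, false, undecided. -/
inductive TV : Type
  | t | f | u
deriving DecidableEq, Repr

/-- The information order on truth values: u <_i t and u <_i f. -/
def TV.ile (x y : TV) : Prop := x = TV.u ∨ x = y

/-- The information order on interpretations, extended pointwise. -/
def ILE {A : Type*} (v w : A → TV) : Prop := ∀ a, TV.ile (v a) (w a)

/-- An abstract dialectical framework on a set of arguments `A`:
each argument `a` has an acceptance condition `C a : (A → Bool) → Bool`. -/
structure ADF (A : Type*) where
  C : A → (A → Bool) → Bool

/-- The trivial interpretation mapping every argument to undecided. -/
def trivialInterp (A : Type*) : A → TV := fun _ => TV.u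

/-- The parents of `a` are the arguments on which its acceptance condition depends. -/
def ADF.parents {A : Type*} [DecidableEq A] (D : ADF A) (a : A) : Set A :=
  {b | ∃ w : A → Bool, D.C a w ≠ D.C a (Function.update w b (!w b))}

/-- A two-valued assignment `w` completes a three-valued interpretation `v`. -/
def Completes {A : Type*} (w : A → Bool) (v : A → TV) : Prop :=
  ∀ b, (v b = TV.t → w b = true) ∧ (v b = TV.f → w b = false)

/-- `φ` is irrefutable under `v`: every completion of `v` makes `φ` true. -/
def Irrefutable {A : Type*} (φ : (A → Bool) → Bool) (v : A → TV) : Prop :=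
  ∀ w : A → Bool, Completes w v → φ w = true

/-- `φ` is unsatisfiable under `v`: every completion of `v` makes `φ` false. -/
def Unsat {A : Type*} (φ : (A → Bool) → Bool) (v : A → TV) : Prop :=
  ∀ w : A → Bool, Completes w v → φ w = false

open Classical in
/-- The characteristic operator Γ_D of an ADF. -/
noncomputable def Gamma {A : Type*} (D : ADF A) (v : A → TV) : A → TV := fun a =>
  if Irrefutable (D.C a) v then TV.t
  else if Unsat (D.C a) v then TV.f
  else TV.u

open Classical in
/-- `v|_P`: agrees with `v` on `P` and is undecided elsewhere. -/
noncomputable def restrictTV {A : Type*} (v : A → TV) (P : Set A) : A → TV :=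
  fun b => if b ∈ P then v b else TV.u

/-- Strong acceptability/deniability of an argument with respect to interpretation `v`
and set `S`, relative to an excluded set `E` (the first index). An argument `a` with
`v a = t` (resp. `v a = f`) is strongly acceptable (resp. strongly deniable) iff there is
`P ⊆ (parents a ∩ S) \ E` with `φ_a^{v|_P}` irrefutable (resp. unsatisfiable) and every
`p ∈ P` strongly acceptable/deniable relative to `E ∪ {p}`. -/
inductive SJrel {A : Type*} [DecidableEq A] (D : ADF A) (v : A → TV) (S : Set A) :
    Set A → A → Prop
  | acc (E : Set A) (a : A) (P : Set A)
      (ha : v a = TV.t)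
      (hP : P ⊆ (D.parents a ∩ S) \ E)
      (hirr : Irrefutable (D.C a) (restrictTV v P))
      (hrec : ∀ p ∈ P, SJrel D v S (E ∪ {p}) p) : SJrel D v S E a
  | den (E : Set A) (a : A) (P : Set A)
      (ha : v a = TV.f)
      (hP : P ⊆ (D.parents a ∩ S) \ E)
      (hunsat : Unsat (D.C a) (restrictTV v P))
      (hrec : ∀ p ∈ P, SJrel D v S (E ∪ {p}) p) : SJrel D v S E a

/-- `a` is strongly acceptable/deniable w.r.t. `v` and `S`
(i.e., relative to the excluded set `{a}`). -/
def StronglyJustified {A : Type*} [DecidableEq A] (D : ADF A) (v : A → TV)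
    (S : Set A) (a : A) : Prop :=
  SJrel D v S {a} a

/-- `S` is a least set for `a` with respect to `v`. -/
def LeastSet {A : Type*} [DecidableEq A] (D : ADF A) (v : A → TV)
    (a : A) (S : Set A) : Prop :=
  StronglyJustified D v S a ∧
  ∀ S' : Set A, S'.ncard < S.ncard → ¬ StronglyJustified D v S' a

/-- An interpretation is strongly admissible iff every argument assigned `t`/`f`
is strongly acceptable/deniable w.r.t. `v` and some set `S`. -/
def StronglyAdmissible {A : Type*} [DecidableEq A] (D : ADF A) (v : A → TV) : Prop :=
  ∀ a : A, v a ≠ TV.u → ∃ S : Set A, StronglyJustified D v S a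

/-- `g` is the grounded interpretation of `D`: the least fixed point of `Γ_D`. -/
def IsGrounded {A : Type*} (D : ADF A) (g : A → TV) : Prop :=
  Gamma D g = g ∧ ∀ w : A → TV, Gamma D w = w → ILE g w

/-- An interpretation is admissible iff `v ≤_i Γ_D(v)`. -/
def Admissible {A : Type*} (D : ADF A) (v : A → TV) : Prop :=
  ILE v (Gamma D v)

/-- An interpretation is conflict-free. -/
def ConflictFree {A : Type*} (D : ADF A) (v : A → TV) : Prop :=
  ∀ a : A, (v a = TV.t → ∃ w : A → Bool, Completes w v ∧ D.C a w = true) ∧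
           (v a = TV.f → Unsat (D.C a) v)

/-- The join of two interpretations: take `v`'s value where defined, else `w`'s. -/
def joinI {A : Type*} (v w : A → TV) : A → TV :=
  fun a => if v a = TV.u then w a else v a

open Classical in
/-- Restrictions of two interpretations that agree on the overlap `P ∩ Q` have a common
two-valued completion: follow `v` on `P` and `w` elsewhere. -/
theorem exists_common_completion {A : Type*} (v w : A → TV) (P Q : Set A)
    (h : ∀ p ∈ P, p ∈ Q → v p = w p) :
    ∃ c : A → Bool, Completes c (restrictTV v P) ∧ Completes c (restrictTV w Q) := by
  refine ⟨fun b => if b ∈ P then decide (v b = TV.t) else decide (w b = TV.t), ?_, ?_⟩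
  · intro b
    by_cases hb : b ∈ P <;> simp +contextual [restrictTV, hb]
  · intro b
    by_cases hb : b ∈ P <;> by_cases hq : b ∈ Q
    · simp +contextual [restrictTV, hb, hq, h b hb hq]
    all_goals simp +contextual [restrictTV, hb, hq]

/-- The excluded sets and the sets `S`, `S'` may differ: only the well-founded recursive
structure of the first justification is used. -/
theorem SJrel.agree {A : Type*} [DecidableEq A] {D : ADF A} {v w : A → TV} {S S' : Set A}
    {E : Set A} {a : A} (hva : SJrel D v S E a) :
    ∀ {E' : Set A}, SJrel D w S' E' a → v a = w a := by
  induction hva with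
  | acc E a P ha hP hirr hrec ih =>
    intro E' hwa
    cases hwa with
    | acc _ _ Q hb => rw [ha, hb]
    | den _ _ Q hb hQ hunsat hrec' =>
      obtain ⟨c, hc, hc'⟩ := exists_common_completion v w P Q
        (fun p hp hq => ih p hp (hrec' p hq))
      have h1 := hirr c hc
      rw [hunsat c hc'] at h1
      cases h1
  | den E a P ha hP hunsat hrec ih =>
    intro E' hwa
    cases hwa with
    | den _ _ Q hb => rw [ha, hb]
    | acc _ _ Q hb hQ hirr hrec' =>
      obtain ⟨c, hc, hc'⟩ := exists_common_completion v w P Q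
        (fun p hp hq => ih p hp (hrec' p hq))
      have h1 := hirr c hc'
      rw [hunsat c hc] at h1
      cases h1

/-- Two strongly admissible interpretations never assign opposite
defined values to an argument; hence they agree wherever both are defined and
the join is well-defined. -/
theorem strongly_admissible_compatible {A : Type*} [Fintype A] [DecidableEq A]
    (D : ADF A) (v w : A → TV)
    (hv : StronglyAdmissible D v) (hw : StronglyAdmissible D w) :
    (∀ a : A, ¬ (v a = TV.t ∧ w a = TV.f)) ∧
      (∀ a : A, v a ≠ TV.u → w a ≠ TV.u → v a = w a) := by
  have key : ∀ a : A, v a ≠ TV.u → w a ≠ TV.u → v a = w a := by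
    intro a hva hwa
    obtain ⟨S, hS⟩ := hv a hva
    obtain ⟨S', hS'⟩ := hw a hwa
    exact SJrel.agree hS hS'
  refine ⟨?_, key⟩
  rintro a ⟨h1, h2⟩
  have h := key a (by simp [h1]) (by simp [h2])
  rw [h1, h2] at h
  cases h
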